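/- The characteristic polynomial of the moment matrix M₀ of the uniform design measure equals (X − 1)·(X − (b₀ + (m−2)b₁))^{m−1}·(X − (b₀ − 2b₁))^{(m−1)(m−2)/2}; equivalently, M₀ has eigenvalues 1, b₀ + (m−2)b₁ and b₀ − 2b₁ with multiplicities 1, m−1 and (m−1)(m−2)/2 respectively. (Theorem 2, second part.) -/

import Mathlib

open Matrix Finset

namespace OofA

/-- The index set `S` of pairs `(i,j)` with `i < j`. -/
abbrev Pairs (m : ℕ) := {ij : Fin m × Fin m // ij.1 < ij.2}

/-- `z_{ij}(a)`: for a treatment `a` (a permutation, `a k` being the component placed at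
position `k`), this equals `c h` where `h` is the distance between the positions of the
components `i` and `j` in `a`, with sign `+` if `i` precedes `j` and `-` otherwise. -/
noncomputable def z {m : ℕ} (c : ℕ → ℝ) (a : Equiv.Perm (Fin m)) (ij : Pairs m) : ℝ :=
  if (a.symm ij.1.1 : ℕ) < (a.symm ij.1.2 : ℕ) then
    c (Nat.dist (a.symm ij.1.1 : ℕ) (a.symm ij.1.2 : ℕ))
  else
    -c (Nat.dist (a.symm ij.1.1 : ℕ) (a.symm ij.1.2 : ℕ))

/-- The vector `x(a) = (1, z(a)ᵀ)ᵀ ∈ ℝ^p`, indexed by `Unit ⊕ Pairs m`. -/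
noncomputable def x {m : ℕ} (c : ℕ → ℝ) (a : Equiv.Perm (Fin m)) : (Unit ⊕ Pairs m) → ℝ :=
  Sum.elim (fun _ => (1 : ℝ)) (z c a)

/-- The moment matrix `M(w) = Σ_a w(a) x(a) x(a)ᵀ` of a design measure `w`. -/
noncomputable def momentMatrix {m : ℕ} (c : ℕ → ℝ) (w : Equiv.Perm (Fin m) → ℝ) :
    Matrix (Unit ⊕ Pairs m) (Unit ⊕ Pairs m) ℝ :=
  ∑ a : Equiv.Perm (Fin m), w a • Matrix.vecMulVec (x c a) (x c a)

/-- The moment matrix `M₀` of the uniform design measure `w₀(a) = 1/m!`. -/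
noncomputable def M0 (m : ℕ) (c : ℕ → ℝ) : Matrix (Unit ⊕ Pairs m) (Unit ⊕ Pairs m) ℝ :=
  momentMatrix c (fun _ => 1 / (Nat.factorial m : ℝ))

/-- A signed permutation matrix: exactly one nonzero entry in each row and in each column,
each nonzero entry being `1` or `-1`. -/
def IsSignedPerm {n : Type*} [Fintype n] (R : Matrix n n ℝ) : Prop :=
  (∀ i, ∃! j, R i j ≠ 0) ∧ (∀ j, ∃! i, R i j ≠ 0) ∧
    (∀ i j, R i j ≠ 0 → R i j = 1 ∨ R i j = -1)

/-- `b₀ = (2/(m(m−1))) Σ_{h=1}^{m−1} (m−h) c_h²`. -/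
noncomputable def b0 (m : ℕ) (c : ℕ → ℝ) : ℝ :=
  (2 / ((m : ℝ) * ((m : ℝ) - 1))) *
    ∑ h ∈ Finset.Icc 1 (m - 1), ((m : ℝ) - (h : ℝ)) * (c h) ^ 2

/-- `b₁ = (2/(m(m−1)(m−2))) Σ (m−h₁−h₂) c_{h₁} (2c_{h₁+h₂} − c_{h₂})`,
summed over `h₁, h₂ ≥ 1` with `h₁ + h₂ ≤ m − 1`. -/
noncomputable def b1 (m : ℕ) (c : ℕ → ℝ) : ℝ :=
  (2 / ((m : ℝ) * ((m : ℝ) - 1) * ((m : ℝ) - 2))) *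
    ∑ h1 ∈ Finset.Icc 1 (m - 1), ∑ h2 ∈ Finset.Icc 1 (m - 1 - h1),
      ((m : ℝ) - (h1 : ℝ) - (h2 : ℝ)) * c h1 * (2 * c (h1 + h2) - c h2)

/-- The `q × q` matrix `V` of (7). -/
noncomputable def V (m : ℕ) : Matrix (Pairs m) (Pairs m) ℝ := fun ij kl =>
  if (ij.1.1 = kl.1.1 ∧ ij.1.2 ≠ kl.1.2) ∨ (ij.1.1 ≠ kl.1.1 ∧ ij.1.2 = kl.1.2) then 1
  else if ij.1.1 = kl.1.2 ∨ ij.1.2 = kl.1.1 then -1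
  else 0

lemma sum2 (m : ℕ) (G : ℕ → ℝ) :
    ∑ p ∈ range m, ∑ q ∈ range m, (if p < q then G (q - p) else 0) =
    ∑ h ∈ Finset.Icc 1 (m - 1), ((m : ℝ) - (h : ℝ)) * G h := by
  have : ∀ h ∈ Finset.Icc 1 (m - 1), ((m : ℝ) - (h : ℝ)) * G h = ∑ p ∈ range (m - h), G h := by
    intro h hh
    rw [Finset.mem_Icc] at hh
    rw [Finset.sum_const, card_range, nsmul_eq_mul, Nat.cast_sub (by omega)]
  rw [Finset.sum_congr rfl this]
  simp_rw [← Finset.sum_filter]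
  rw [Finset.sum_sigma', Finset.sum_sigma']
  refine Finset.sum_bij' (fun a _ => ⟨a.2 - a.1, a.1⟩) (fun a _ => ⟨a.2, a.2 + a.1⟩) ?_ ?_ ?_ ?_ ?_
  · rintro ⟨p, q⟩ h; simp at h ⊢; omega
  · rintro ⟨p, q⟩ h; simp at h ⊢; omega
  · rintro ⟨p, q⟩ h; simp at h ⊢; omega
  · rintro ⟨p, q⟩ h; simp at h ⊢
  · rintro ⟨p, q⟩ h; rfl

lemma sum3 (m : ℕ) (G : ℕ → ℕ → ℝ) :
    ∑ p ∈ range m, ∑ q ∈ range m, ∑ r ∈ range m,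
      (if p < q ∧ q < r then G (q - p) (r - q) else 0) =
    ∑ h1 ∈ Finset.Icc 1 (m - 1), ∑ h2 ∈ Finset.Icc 1 (m - 1 - h1),
      ((m : ℝ) - (h1 : ℝ) - (h2 : ℝ)) * G h1 h2 := by
  have : ∀ h1 ∈ Finset.Icc 1 (m - 1), ∀ h2 ∈ Finset.Icc 1 (m - 1 - h1),
      ((m : ℝ) - (h1 : ℝ) - (h2 : ℝ)) * G h1 h2 = ∑ p ∈ range (m - h1 - h2), G h1 h2 := by
    intro h1 hh1 h2 hh2
    rw [Finset.mem_Icc] at hh1 hh2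
    rw [Finset.sum_const, card_range, nsmul_eq_mul, Nat.cast_sub (by omega),
      Nat.cast_sub (by omega)]
  rw [Finset.sum_congr rfl (fun h1 hh1 => Finset.sum_congr rfl (this h1 hh1))]
  simp_rw [← Finset.sum_filter]
  simp_rw [Finset.sum_sigma']
  refine Finset.sum_bij' (fun a _ => ⟨a.2.1 - a.1, a.2.2 - a.2.1, a.1⟩)
    (fun a _ => ⟨a.2.2, a.2.2 + a.1, a.2.2 + a.1 + a.2.1⟩) ?_ ?_ ?_ ?_ ?_
  · rintro ⟨p, q, r⟩ h; simp at h ⊢; omega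
  · rintro ⟨p, q, r⟩ h; simp at h ⊢; omega
  · rintro ⟨p, q, r⟩ h; simp at h ⊢; omega
  · rintro ⟨p, q, r⟩ h; simp at h ⊢
  · rintro ⟨p, q, r⟩ h; rfl

lemma tri_comm (m : ℕ) (G : ℕ → ℕ → ℝ) :
    ∑ h1 ∈ Finset.Icc 1 (m - 1), ∑ h2 ∈ Finset.Icc 1 (m - 1 - h1), G h1 h2 =
    ∑ h1 ∈ Finset.Icc 1 (m - 1), ∑ h2 ∈ Finset.Icc 1 (m - 1 - h1), G h2 h1 := by
  apply Finset.sum_comm'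
  intro a b; simp; omega

/-- signed kernel -/
noncomputable def f (c : ℕ → ℝ) (u v : ℕ) : ℝ :=
  if u < v then c (v - u) else if v < u then - c (u - v) else 0

lemma f_anti (c : ℕ → ℝ) (u v : ℕ) : f c u v = - f c v u := by
  unfold f; split_ifs <;> first | omega | simp

lemma f_self (c : ℕ → ℝ) (u : ℕ) : f c u u = 0 := by simp [f]

lemma f_sq_sum (m : ℕ) (c : ℕ → ℝ) :
    ∑ u ∈ range m, ∑ v ∈ range m, f c u v * f c u v =
      2 * ∑ h ∈ Finset.Icc 1 (m - 1), ((m : ℝ) - (h : ℝ)) * (c h) ^ 2 := by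
  have h1 : ∀ u v, f c u v * f c u v =
      (if u < v then c (v - u) ^ 2 else 0) + (if v < u then c (u - v) ^ 2 else 0) := by
    intro u v; unfold f; split_ifs <;> first | omega | (simp; try ring)
  simp_rw [h1, Finset.sum_add_distrib]
  rw [sum2 m (fun h => c h ^ 2), Finset.sum_comm, sum2 m (fun h => c h ^ 2)]
  ring

lemma f_tri_sum (m : ℕ) (c : ℕ → ℝ) :
    ∑ u ∈ range m, ∑ v ∈ range m, ∑ w ∈ range m, (if v = w then 0 else f c u v * f c u w) =
      2 * ∑ h1 ∈ Finset.Icc 1 (m - 1), ∑ h2 ∈ Finset.Icc 1 (m - 1 - h1),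
      ((m : ℝ) - (h1 : ℝ) - (h2 : ℝ)) * c h1 * (2 * c (h1 + h2) - c h2) := by
  let A : ℕ → ℕ → ℕ → ℝ := fun p q r => if p < q ∧ q < r then c (q - p) * c ((q - p) + (r - q)) else 0
  let B : ℕ → ℕ → ℕ → ℝ := fun p q r => if p < q ∧ q < r then c (q - p) * c (r - q) else 0
  let D : ℕ → ℕ → ℕ → ℝ := fun p q r => if p < q ∧ q < r then c (r - q) * c ((r - q) + (q - p)) else 0
  have h1 : ∀ u v w, (if v = w then 0 else f c u v * f c u w) =
      A u v w + A u w v - B v u w - B w u v + D v w u + D w v u := by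
    intro u v w
    have e1 : u < v → v < w → v - u + (w - v) = w - u := by omega
    have e2 : u < w → w < v → w - u + (v - w) = v - u := by omega
    have e3 : v < w → w < u → u - w + (w - v) = u - v := by omega
    have e4 : w < v → v < u → u - v + (v - w) = u - w := by omega
    have tri : ∀ a b : ℕ, (a < b ∧ ¬ b < a ∧ a ≠ b ∧ b ≠ a) ∨ a = b ∨ (b < a ∧ ¬ a < b ∧ a ≠ b ∧ b ≠ a) := by
      intro a b; omega
    rcases tri u v with a | rfl | a
    · rcases tri v w with b | rfl | b
      · rcases tri u w with d | rfl | d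
        · simp [A, B, D, f, a, b, d, e1]
        · omega
        · omega
      · simp [A, B, D, f, a]
      · rcases tri u w with d | rfl | d
        · simp [A, B, D, f, a, b, d, e2, mul_comm]
        · simp [A, B, D, f, a, b]
        · simp [A, B, D, f, a, b, d, mul_comm]
    · rcases tri u w with b | rfl | b
      · simp [A, B, D, f, b]
      · simp [A, B, D, f]
      · simp [A, B, D, f, b]
    · rcases tri v w with b | rfl | b
      · rcases tri u w with d | rfl | d
        · simp [A, B, D, f, a, b, d, mul_comm]
        · simp [A, B, D, f, a, b]
        · simp [A, B, D, f, a, b, d, e3, mul_comm]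
      · simp [A, B, D, f, a]
      · rcases tri u w with d | rfl | d
        · omega
        · omega
        · simp [A, B, D, f, a, b, d, e4, mul_comm]
  have hA := sum3 m (fun a b => c a * c (a + b))
  have hB := sum3 m (fun a b => c a * c b)
  have hD := sum3 m (fun a b => c b * c (b + a))
  rw [tri_comm] at hD
  have sw : ∀ (G : ℕ → ℕ → ℕ → ℝ), ∑ u ∈ range m, ∑ v ∈ range m, ∑ w ∈ range m, G u w v =
     ∑ u ∈ range m, ∑ v ∈ range m, ∑ w ∈ range m, G u v w := fun G =>
    Finset.sum_congr rfl fun u _ => Finset.sum_comm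
  have sw' : ∀ (G : ℕ → ℕ → ℕ → ℝ), ∑ u ∈ range m, ∑ v ∈ range m, ∑ w ∈ range m, G v u w =
     ∑ u ∈ range m, ∑ v ∈ range m, ∑ w ∈ range m, G u v w := fun G => Finset.sum_comm
  simp_rw [h1, Finset.sum_add_distrib, Finset.sum_sub_distrib, Finset.sum_add_distrib]
  have eA : ∑ u ∈ range m, ∑ v ∈ range m, ∑ w ∈ range m, A u v w = _ := hA
  have eB : ∑ u ∈ range m, ∑ v ∈ range m, ∑ w ∈ range m, B u v w = _ := hB
  have eD : ∑ u ∈ range m, ∑ v ∈ range m, ∑ w ∈ range m, D u v w = _ := hD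
  rw [sw (fun u v w => A u v w), sw' (fun u v w => B u v w), 
    sw (fun u v w => B v u w), sw' (fun u v w => B u v w),
    sw (fun u w v => D w v u)]
  have sD : ∑ u ∈ range m, ∑ v ∈ range m, ∑ w ∈ range m, D v w u = 
      ∑ u ∈ range m, ∑ v ∈ range m, ∑ w ∈ range m, D u v w := by
    rw [sw' (fun u v w => D u w v), sw D]
  rw [sD, eA, eB, eD]
  simp_rw [Finset.mul_sum, ← Finset.sum_add_distrib, ← Finset.sum_sub_distrib, ← Finset.sum_add_distrib]
  refine Finset.sum_congr rfl fun u _ => Finset.sum_congr rfl fun v _ => ?_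
  ring
lemma exists_perm3 {m : ℕ} {i j k i' j' k' : Fin m} (h1 : i ≠ j) (h2 : i ≠ k) (h3 : j ≠ k)
    (h1' : i' ≠ j') (h2' : i' ≠ k') (h3' : j' ≠ k') :
    ∃ τ : Equiv.Perm (Fin m), τ i = i' ∧ τ j = j' ∧ τ k = k' := by
  have inj : ∀ {i j k : Fin m}, i ≠ j → i ≠ k → j ≠ k → Function.Injective ![i, j, k] := by
    intro i j k h1 h2 h3 a b hab
    fin_cases a <;> fin_cases b <;> simp_all
  have H := (MulAction.isMultiplyPretransitive_iff (G := Equiv.Perm (Fin m)) (α := Fin m) (n := 3)).1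
    (Equiv.Perm.isMultiplyPretransitive (Fin m) 3)
  obtain ⟨g, hg⟩ := H ⟨![i, j, k], inj h1 h2 h3⟩ ⟨![i', j', k'], inj h1' h2' h3'⟩
  refine ⟨g, ?_, ?_, ?_⟩
  · simpa using DFunLike.congr_fun hg 0
  · simpa using DFunLike.congr_fun hg 1
  · simpa using DFunLike.congr_fun hg 2

lemma avg3 {m : ℕ} (hm : 3 ≤ m) (F : Fin m → Fin m → Fin m → ℝ)
    (hF : ∀ u v w, (u = v ∨ u = w ∨ v = w) → F u v w = 0)
    {i j k : Fin m} (h1 : i ≠ j) (h2 : i ≠ k) (h3 : j ≠ k) :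
    (m : ℝ) * (m - 1) * (m - 2) * ∑ σ : Equiv.Perm (Fin m), F (σ i) (σ j) (σ k) =
      (m.factorial : ℝ) * ∑ u, ∑ v, ∑ w, F u v w := by
  set P0 := ∑ σ : Equiv.Perm (Fin m), F (σ i) (σ j) (σ k) with hP0
  have hP : ∀ a b d : Fin m, ∑ σ : Equiv.Perm (Fin m), F (σ a) (σ b) (σ d) =
      if a = b then 0 else if d ∈ ({a, b} : Finset (Fin m)) then 0 else P0 := by
    intro a b d
    split_ifs with e1 e2
    · exact Finset.sum_eq_zero fun σ _ => hF _ _ _ (by simp [e1])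
    · refine Finset.sum_eq_zero fun σ _ => hF _ _ _ ?_
      simp only [Finset.mem_insert, Finset.mem_singleton] at e2
      rcases e2 with rfl | rfl <;> simp
    · simp only [Finset.mem_insert, Finset.mem_singleton, not_or] at e2
      obtain ⟨τ, t1, t2, t3⟩ := exists_perm3 h1 h2 h3 e1 (Ne.symm e2.1) (Ne.symm e2.2)
      rw [hP0, ← t1, ← t2, ← t3]
      exact Equiv.sum_comp (Equiv.mulRight τ) (fun σ : Equiv.Perm (Fin m) => F (σ i) (σ j) (σ k))
  have L : ∑ a, ∑ b, ∑ d, ∑ σ : Equiv.Perm (Fin m), F (σ a) (σ b) (σ d) =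
      (m.factorial : ℝ) * ∑ u, ∑ v, ∑ w, F u v w := by
    have : ∀ σ : Equiv.Perm (Fin m), ∑ a, ∑ b, ∑ d, F (σ a) (σ b) (σ d) = ∑ u, ∑ v, ∑ w, F u v w := by
      intro σ
      rw [← Equiv.sum_comp σ (fun u => ∑ v, ∑ w, F u v w)]
      refine Finset.sum_congr rfl fun a _ => ?_
      rw [← Equiv.sum_comp σ (fun v => ∑ w, F (σ a) v w)]
      refine Finset.sum_congr rfl fun b _ => ?_
      rw [← Equiv.sum_comp σ (fun w => F (σ a) (σ b) w)]
    calc _ = ∑ a, ∑ b, ∑ σ : Equiv.Perm (Fin m), ∑ d, F (σ a) (σ b) (σ d) := 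
          Finset.sum_congr rfl fun a _ => Finset.sum_congr rfl fun b _ => Finset.sum_comm
      _ = ∑ a, ∑ σ : Equiv.Perm (Fin m), ∑ b, ∑ d, F (σ a) (σ b) (σ d) := 
          Finset.sum_congr rfl fun a _ => Finset.sum_comm
      _ = ∑ σ : Equiv.Perm (Fin m), ∑ a, ∑ b, ∑ d, F (σ a) (σ b) (σ d) := Finset.sum_comm
      _ = _ := by
        rw [Finset.sum_congr rfl fun σ _ => this σ, Finset.sum_const, Finset.card_univ,
          Fintype.card_perm, Fintype.card_fin, nsmul_eq_mul]
  rw [← L]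
  simp_rw [hP]
  have c1 : ∀ a b : Fin m, (∑ d, if a = b then 0 else if d ∈ ({a, b} : Finset (Fin m)) then 0 else P0)
      = if a = b then 0 else ((m : ℝ) - 2) * P0 := by
    intro a b
    split_ifs with e
    · simp
    · have : ∀ d, (if d ∈ ({a, b} : Finset (Fin m)) then 0 else P0) =
        P0 - (if d ∈ ({a, b} : Finset (Fin m)) then P0 else 0) := by
        intro d; split_ifs <;> simp
      simp_rw [this, Finset.sum_sub_distrib, Finset.sum_ite_mem]
      simp [Finset.card_pair e]; ring
  simp_rw [c1]
  have c2 : ∀ a : Fin m, (∑ b, if a = b then 0 else ((m : ℝ) - 2) * P0)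
      = ((m : ℝ) - 1) * (((m : ℝ) - 2) * P0) := by
    intro a
    have : ∀ b, (if a = b then 0 else ((m : ℝ) - 2) * P0) =
        ((m : ℝ) - 2) * P0 - (if a = b then ((m : ℝ) - 2) * P0 else 0) := by
        intro d; split_ifs <;> simp
    simp_rw [this, Finset.sum_sub_distrib]
    simp; ring
  simp_rw [c2]
  simp; ring

lemma avg2 {m : ℕ} (hm : 3 ≤ m) (F : Fin m → Fin m → ℝ)
    (hF : ∀ u, F u u = 0) {i j : Fin m} (h1 : i ≠ j) :
    (m : ℝ) * (m - 1) * ∑ σ : Equiv.Perm (Fin m), F (σ i) (σ j) =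
      (m.factorial : ℝ) * ∑ u, ∑ v, F u v := by
  obtain ⟨k, hk⟩ : ∃ k, k ∉ ({i, j} : Finset (Fin m)) := by
    by_contra! H
    have := Finset.card_le_card (fun x _ => H x : (Finset.univ : Finset (Fin m)) ⊆ _)
    rw [Finset.card_pair h1] at this
    simp at this; omega
  simp only [Finset.mem_insert, Finset.mem_singleton, not_or] at hk
  have h := avg3 hm (fun u v w => if w ∈ ({u, v} : Finset (Fin m)) then 0 else F u v) (by
    intro u v w h
    rcases h with rfl | rfl | rfl <;> simp [hF]) h1 (Ne.symm hk.1) (Ne.symm hk.2)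
  have c1 : ∀ a b : Fin m, (∑ d, if d ∈ ({a, b} : Finset (Fin m)) then 0 else F a b)
      = ((m : ℝ) - 2) * F a b := by
    intro a b
    by_cases e : a = b
    · subst e; simp [hF]
    · have : ∀ d, (if d ∈ ({a, b} : Finset (Fin m)) then 0 else F a b) =
        F a b - (if d ∈ ({a, b} : Finset (Fin m)) then F a b else 0) := by
        intro d; split_ifs <;> simp
      simp_rw [this, Finset.sum_sub_distrib, Finset.sum_ite_mem]
      simp [Finset.card_pair e]; ring
  simp_rw [c1, ← Finset.mul_sum] at h
  have c2 : ∀ σ : Equiv.Perm (Fin m), (if σ k ∈ ({σ i, σ j} : Finset (Fin m)) then 0 else F (σ i) (σ j))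
      = F (σ i) (σ j) := by
    intro σ; simp [hk.1, hk.2]
  simp_rw [c2] at h
  have hm2 : (m : ℝ) - 2 ≠ 0 := by
    have : (3 : ℝ) ≤ m := by exact_mod_cast hm
    linarith
  apply mul_left_cancel₀ hm2
  linear_combination h

/-- mixed moment -/
noncomputable def Q {m : ℕ} (c : ℕ → ℝ) (i j k l : Fin m) : ℝ :=
  (1 / (m.factorial : ℝ)) * ∑ σ : Equiv.Perm (Fin m), f c (σ i) (σ j) * f c (σ k) (σ l)

lemma z_eq {m : ℕ} (c : ℕ → ℝ) (a : Equiv.Perm (Fin m)) (ij : Pairs m) :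
    z c a ij = f c (a.symm ij.1.1) (a.symm ij.1.2) := by
  have hne : (a.symm ij.1.1 : ℕ) ≠ (a.symm ij.1.2 : ℕ) := fun h =>
    ij.2.ne (a.symm.injective (Fin.ext h))
  unfold z f
  split_ifs with h h'
  · rw [Nat.dist_eq_sub_of_le h.le]
  · rw [Nat.dist_eq_sub_of_le_right h'.le]
  · omega

lemma fact_ne (m : ℕ) : (m.factorial : ℝ) ≠ 0 := by exact_mod_cast m.factorial_ne_zero

lemma Q_diag {m : ℕ} (hm : 3 ≤ m) (c : ℕ → ℝ) {i j : Fin m} (h : i ≠ j) :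
    Q c i j i j = b0 m c := by
  have h2 := avg2 hm (fun u v => f c u v * f c u v) (by intro u; simp [f_self]) h
  have h3 := f_sq_sum m c
  simp_rw [Finset.sum_range] at h3
  rw [h3] at h2
  have hm' : (3 : ℝ) ≤ m := by exact_mod_cast hm
  have e0 := fact_ne m
  have e1 : (m : ℝ) ≠ 0 := by linarith
  have e2 : (m : ℝ) - 1 ≠ 0 := by linarith
  unfold Q b0
  simp only [← pow_two] at h2 ⊢
  field_simp
  linear_combination h2

lemma Q_tri {m : ℕ} (hm : 3 ≤ m) (c : ℕ → ℝ) {i j k : Fin m} (h1 : i ≠ j) (h2 : i ≠ k) (h3 : j ≠ k) :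
    Q c i j i k = b1 m c := by
  have h := avg3 hm (fun u v w => if v = w then 0 else f c u v * f c u w) (by
    intro u v w h
    rcases h with rfl | rfl | rfl <;> simp [f_self]) h1 h2 h3
  have h4 := f_tri_sum m c
  simp_rw [Finset.sum_range] at h4
  simp_rw [Fin.ext_iff] at h
  rw [h4] at h
  have c2 : ∀ σ : Equiv.Perm (Fin m), (if ((σ j : Fin m) : ℕ) = σ k then 0 else f c (σ i) (σ j) * f c (σ i) (σ k))
      = f c (σ i) (σ j) * f c (σ i) (σ k) := by
    intro σ; rw [if_neg]; intro hh; exact h3 (σ.injective (Fin.ext hh))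
  simp_rw [c2] at h
  have hm' : (3 : ℝ) ≤ m := by exact_mod_cast hm
  have e0 := fact_ne m
  have e1 : (m : ℝ) ≠ 0 := by linarith
  have e2 : (m : ℝ) - 1 ≠ 0 := by linarith
  have e3 : (m : ℝ) - 2 ≠ 0 := by linarith
  unfold Q b1
  field_simp
  linear_combination h

lemma Q_anti1 {m : ℕ} (c : ℕ → ℝ) (i j k l : Fin m) : Q c i j k l = - Q c j i k l := by
  unfold Q
  rw [← mul_neg, ← Finset.sum_neg_distrib]
  congr 1
  refine Finset.sum_congr rfl fun σ _ => ?_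
  rw [f_anti c (σ i) (σ j)]; ring

lemma Q_anti2 {m : ℕ} (c : ℕ → ℝ) (i j k l : Fin m) : Q c i j k l = - Q c i j l k := by
  unfold Q
  rw [← mul_neg, ← Finset.sum_neg_distrib]
  congr 1
  refine Finset.sum_congr rfl fun σ _ => ?_
  rw [f_anti c (σ k) (σ l)]; ring

lemma Q_disj {m : ℕ} (c : ℕ → ℝ) {i j k l : Fin m} (h1 : k ≠ i) (h2 : k ≠ j) (h3 : l ≠ i) (h4 : l ≠ j) :
    Q c i j k l = 0 := by
  have h : Q c i j k l = Q c j i k l := by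
    unfold Q
    congr 1
    rw [← Equiv.sum_comp (Equiv.mulRight (Equiv.swap i j))]
    refine Finset.sum_congr rfl fun σ _ => ?_
    simp [Equiv.swap_apply_of_ne_of_ne h1 h2, Equiv.swap_apply_of_ne_of_ne h3 h4]
  have := Q_anti1 c i j k l
  linarith

lemma mean_zero {m : ℕ} (c : ℕ → ℝ) (i j : Fin m) :
    ∑ σ : Equiv.Perm (Fin m), f c (σ i) (σ j) = 0 := by
  have h : ∑ σ : Equiv.Perm (Fin m), f c (σ i) (σ j) = ∑ σ : Equiv.Perm (Fin m), f c (σ j) (σ i) := by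
    rw [← Equiv.sum_comp (Equiv.mulRight (Equiv.swap i j))]
    refine Finset.sum_congr rfl fun σ _ => ?_
    simp
  have h' : ∑ σ : Equiv.Perm (Fin m), f c (σ i) (σ j) = - ∑ σ : Equiv.Perm (Fin m), f c (σ j) (σ i) := by
    rw [← Finset.sum_neg_distrib]
    exact Finset.sum_congr rfl fun σ _ => f_anti _ _ _
  linarith

/-- oriented incidence matrix -/
noncomputable def B (m : ℕ) : Matrix (Pairs m) (Fin m) ℝ := fun ij k =>
  (if k = ij.1.1 then 1 else 0) - (if k = ij.1.2 then 1 else 0)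

lemma Q_eq {m : ℕ} (hm : 3 ≤ m) (c : ℕ → ℝ) (ij kl : Pairs m) :
    Q c ij.1.1 ij.1.2 kl.1.1 kl.1.2 =
      (((b1 m c) • B m) * (B m)ᵀ - Matrix.scalar (Pairs m) (-(b0 m c - 2 * b1 m c))) ij kl := by
  obtain ⟨⟨i, j⟩, hij⟩ := ij
  obtain ⟨⟨k, l⟩, hkl⟩ := kl
  simp only at hij hkl
  have hBB : ((b1 m c • B m) * (B m)ᵀ) ⟨(i, j), hij⟩ ⟨(k, l), hkl⟩ =
    b1 m c * ((if i = k then 1 else 0) - (if i = l then 1 else 0) - (if j = k then 1 else 0)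
      + (if j = l then 1 else 0)) := by
    rw [Matrix.smul_mul, Matrix.smul_apply, smul_eq_mul]
    congr 1
    simp only [Matrix.mul_apply, Matrix.transpose_apply, B, sub_mul, mul_sub,
      Finset.sum_sub_distrib, ite_mul, one_mul, zero_mul, Finset.sum_ite_eq', Finset.mem_univ, if_true]
    ring
  rw [Matrix.sub_apply, hBB, Matrix.scalar_apply, Matrix.diagonal_apply]
  simp only [Subtype.mk.injEq, Prod.mk.injEq]
  by_cases e1 : i = k
  · subst e1
    by_cases e2 : j = l
    · subst e2
      rw [Q_diag hm c hij.ne]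
      simp [hij.ne, hij.ne']; ring
    · rw [Q_tri hm c hij.ne hkl.ne e2]
      simp [e2, hkl.ne, hij.ne']
  · by_cases e2 : j = l
    · subst e2
      rw [Q_anti1, Q_anti2, neg_neg, Q_tri hm c hij.ne' hkl.ne' e1]
      simp [e1, hij.ne, hkl.ne']
    · by_cases e3 : i = l
      · subst e3
        have : j ≠ k := fun h => by subst h; exact absurd hij hkl.not_gt
        rw [Q_anti2, Q_tri hm c hij.ne hkl.ne' this]
        simp [e1, e2, this]
      · by_cases e4 : j = k
        · subst e4
          rw [Q_anti1, Q_tri hm c hij.ne' hkl.ne e3]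
          simp [e1, e2, e3]
        · rw [Q_disj c (Ne.symm e1) (Ne.symm e4) (Ne.symm e3) (Ne.symm e2)]
          simp [e1, e2, e3, e4]

lemma M0_eq {m : ℕ} (hm : 3 ≤ m) (c : ℕ → ℝ) :
    M0 m c = Matrix.fromBlocks (1 : Matrix Unit Unit ℝ) 0 0
      (((b1 m c) • B m) * (B m)ᵀ - Matrix.scalar (Pairs m) (-(b0 m c - 2 * b1 m c))) := by
  have hs : ∀ g : Equiv.Perm (Fin m) → ℝ, ∑ a : Equiv.Perm (Fin m), g a.symm = ∑ a, g a := fun g =>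
    Equiv.sum_comp (Equiv.inv (Equiv.Perm (Fin m))) g
  have e0 := fact_ne m
  ext (u | ij) (v | kl)
  · simp [M0, momentMatrix, Matrix.sum_apply, Matrix.vecMulVec_apply, x, Fintype.card_perm, e0]
  · simp only [M0, momentMatrix, Matrix.sum_apply, Matrix.smul_apply, Matrix.vecMulVec_apply, x, smul_eq_mul,
      Sum.elim_inl, Sum.elim_inr, z_eq, one_mul, Matrix.fromBlocks_apply₁₂, Matrix.zero_apply]
    rw [← Finset.mul_sum, hs (fun a => f c (a kl.1.1) (a kl.1.2)), mean_zero, mul_zero]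
  · simp only [M0, momentMatrix, Matrix.sum_apply, Matrix.smul_apply, Matrix.vecMulVec_apply, x, smul_eq_mul,
      Sum.elim_inl, Sum.elim_inr, z_eq, mul_one, Matrix.fromBlocks_apply₂₁, Matrix.zero_apply]
    rw [← Finset.mul_sum, hs (fun a => f c (a ij.1.1) (a ij.1.2)), mean_zero, mul_zero]
  · rw [Matrix.fromBlocks_apply₂₂, ← Q_eq hm]
    simp only [M0, momentMatrix, Matrix.sum_apply, Matrix.smul_apply, Matrix.vecMulVec_apply, x, smul_eq_mul,
      Sum.elim_inr, z_eq]
    rw [← Finset.mul_sum, hs (fun a => f c (a ij.1.1) (a ij.1.2) * f c (a kl.1.1) (a kl.1.2))]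
    rfl

lemma sum_pairs (m : ℕ) (g : Fin m → Fin m → ℝ) (h0 : ∀ i, g i i = 0) (hs : ∀ i j, g i j = g j i) :
    2 * ∑ ij : Pairs m, g ij.1.1 ij.1.2 = ∑ i, ∑ j, g i j := by
  have h1 : ∑ ij : Pairs m, g ij.1.1 ij.1.2 = ∑ i, ∑ j, if i < j then g i j else 0 := by
    rw [← Finset.sum_product' Finset.univ Finset.univ (fun i j => if i < j then g i j else 0),
      Finset.univ_product_univ, ← Finset.sum_filter]
    exact (Finset.sum_subtype (p := fun ij : Fin m × Fin m => ij.1 < ij.2)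
      (Finset.univ.filter fun ij : Fin m × Fin m => ij.1 < ij.2) (by simp) (fun ij => g ij.1 ij.2)).symm
  have h2 : ∀ i j, g i j = (if i < j then g i j else 0) + (if j < i then g j i else 0) := by
    intro i j
    rcases lt_trichotomy i j with h | rfl | h
    · simp [h, h.not_gt]
    · simp [h0]
    · simp [h, h.not_gt, hs i j]
  have h3 : ∑ i, ∑ j, g i j = ∑ i, ∑ j, ((if i < j then g i j else 0) + (if j < i then g j i else 0)) :=
    Finset.sum_congr rfl fun i _ => Finset.sum_congr rfl fun j _ => h2 i j
  rw [h3]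
  simp_rw [Finset.sum_add_distrib]
  rw [h1, Finset.sum_comm (f := fun i j : Fin m => if j < i then g j i else 0)]
  ring

lemma card_pairs (m : ℕ) : 2 * Fintype.card (Pairs m) = m * (m - 1) := by
  have h := sum_pairs m (fun i j => if i = j then 0 else 1) (by simp) (by
    intro i j; simp [eq_comm])
  have h2 : ∑ ij : Pairs m, (if ij.1.1 = ij.1.2 then (0:ℝ) else 1) = Fintype.card (Pairs m) := by
    rw [Finset.sum_congr rfl fun ij _ => if_neg ij.2.ne]; simp
  rw [h2] at h
  have h3 : ∀ i : Fin m, (∑ j, if i = j then (0:ℝ) else 1) = (m:ℝ) - 1 := by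
    intro i
    have : ∀ j, (if i = j then (0:ℝ) else 1) = 1 - (if i = j then 1 else 0) := by
      intro j; split_ifs <;> simp
    simp_rw [this, Finset.sum_sub_distrib]; simp
  simp_rw [h3] at h
  rcases m with _ | m
  · simp
  · simp at h ⊢; exact_mod_cast h

lemma BtB (m : ℕ) (b : ℝ) : (B m)ᵀ * (b • B m) =
    Matrix.vecMulVec (fun _ => -b) (fun _ => 1) - Matrix.scalar _ (-(b * m)) := by
  ext k l
  rw [Matrix.mul_smul, Matrix.smul_apply, smul_eq_mul]
  have h := sum_pairs m (fun i j => ((if k = i then 1 else 0) - (if k = j then 1 else 0)) *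
    ((if l = i then 1 else 0) - (if l = j then 1 else 0))) (by simp) (by intro i j; ring)
  have h2 : 2 * ((B m)ᵀ * B m) k l = 2 * ((if k = l then (m : ℝ) else 0) - 1) := by
    rw [Matrix.mul_apply]
    simp only [Matrix.transpose_apply, B]
    rw [h]
    by_cases e : k = l
    · subst e
      simp [sub_mul, mul_sub, Finset.sum_sub_distrib, Finset.sum_add_distrib]
      ring
    · simp [sub_mul, mul_sub, Finset.sum_sub_distrib, Finset.sum_add_distrib, e, Ne.symm e]
      try ring
  have h3 := mul_left_cancel₀ two_ne_zero h2
  rw [h3, Matrix.sub_apply, Matrix.vecMulVec_apply, Matrix.scalar_apply, Matrix.diagonal_apply]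
  split_ifs <;> ring

open Polynomial in
/-- Theorem 2, second part: the characteristic polynomial of `M₀` is
`(X − 1)(X − (b₀ + (m−2)b₁))^{m−1}(X − (b₀ − 2b₁))^{(m−1)(m−2)/2}`. -/
theorem statement2 {m : ℕ} (hm : 3 ≤ m) (c : ℕ → ℝ) (hc1 : c 1 = 1)
    (hmono : ∀ h : ℕ, 1 ≤ h → h + 1 ≤ m - 1 → c (h + 1) ≤ c h)
    (hlast : 0 ≤ c (m - 1)) :
    (M0 m c).charpoly =
      (X - C 1) * (X - C (b0 m c + ((m : ℝ) - 2) * b1 m c)) ^ (m - 1) *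
        (X - C (b0 m c - 2 * b1 m c)) ^ ((m - 1) * (m - 2) / 2) := by
  rw [M0_eq hm, Matrix.charpoly_fromBlocks_zero₁₂, Matrix.charpoly_one, Matrix.charpoly_sub_scalar]
  have hcard := card_pairs m
  have hq : Fintype.card (Pairs m) = (m - 1) * (m - 2) / 2 + (m - 1) ∧ m ≤ Fintype.card (Pairs m) := by
    obtain ⟨n, rfl⟩ : ∃ n, m = n + 3 := ⟨m - 3, by omega⟩
    simp only [show n + 3 - 1 = n + 2 by omega, show n + 3 - 2 = n + 1 by omega] at *
    have h1 : (n + 3) * (n + 2) = (n + 2) * (n + 1) + 2 * (n + 2) := by ring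
    have h2 : (n + 3) * (n + 2) = n * n + 5 * n + 6 := by ring
    have h3 : 0 ≤ n * n := Nat.zero_le _
    constructor
    · omega
    · omega
  rw [Matrix.charpoly_mul_comm_of_le _ _ (by simpa using hq.2), BtB, Matrix.charpoly_sub_scalar,
    Matrix.charpoly_vecMulVec]
  have e1 : Fintype.card (Pairs m) - Fintype.card (Fin m) + 1 = (m - 1) * (m - 2) / 2 := by
    rw [Fintype.card_fin]; omega
  have e2 : (X : ℝ[X]) ^ Fintype.card (Fin m) = X ^ (m - 1) * X := by
    rw [Fintype.card_fin, ← pow_succ]; congr 1; omega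
  rw [← e1, e2]
  simp [Polynomial.smul_eq_C_mul, dotProduct, pow_succ]
  ring_nf

end OofA
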